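/- In the gluing setup, for every x ∈ V_p, every g ∈ 𝔉, and every y ∈ V_g, we have d̂(x,y) = inf{ p̂(x,b) + ĝ(b,y) : b ∈ V_g ∩ V_p }. -/

import Mathlib

open scoped Classical

universe u

namespace GraphMetricPaper

variable {X : Type u}

/-- The vertex set `V = ⋃ E` of a graph given by an adjacency relation `E`. -/
def Vtx (E : X → X → Prop) : Set X := {x | ∃ y, E x y}

/-- Two points are joined by a walk in the graph `E`. -/
def Joined (E : X → X → Prop) (x y : X) : Prop :=
  ∃ (n : ℕ) (c : ℕ → X), c 0 = x ∧ c n = y ∧ ∀ i, i < n → E (c i) (c (i + 1))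

/-- The set of weights of walks from `x` to `y`. -/
def walkSums (E : X → X → Prop) (d : X → X → ℝ) (x y : X) : Set ℝ :=
  {s | ∃ (n : ℕ) (c : ℕ → X), c 0 = x ∧ c n = y ∧ (∀ i, i < n → E (c i) (c (i + 1))) ∧
    s = ∑ i ∈ Finset.range n, d (c i) (c (i + 1))}

/-- The shortest-path pseudometric `d̂` determined by a weight function `d` on a graph `E`. -/
noncomputable def hatd (E : X → X → Prop) (d : X → X → ℝ) (x y : X) : ℝ :=
  sInf (walkSums E d x y)

/-- The function `ď` bounding the possible extensions of `d` from below: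
`ď(x,y) = sup_{ab ∈ E} max {0, d(ab) - d̂(a,x) - d̂(y,b)}`. -/
noncomputable def checkd (E : X → X → Prop) (d : X → X → ℝ) (x y : X) : ℝ :=
  sSup ({0} ∪ {r | ∃ a b, E a b ∧ r = d a b - hatd E d a x - hatd E d y b})

/-- The pseudometric `d̈` on doubletons:
`d̈(xy,uv) = min {d̂(x,u) + d̂(y,v), d̂(x,v) + d̂(y,u)}`. -/
noncomputable def ddot (E : X → X → Prop) (d : X → X → ℝ) (x y u v : X) : ℝ :=
  min (hatd E d x u + hatd E d y v) (hatd E d x v + hatd E d y u)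

/-- `d` is a graph pseudometric with edge relation `E`:  `E` is a (symmetric, irreflexive)
connected graph, `d` is a nonnegative symmetric weight on the edges, and `d = d̂` on edges. -/
structure IsGraphPseudometric (E : X → X → Prop) (d : X → X → ℝ) : Prop where
  symm : ∀ ⦃a b⦄, E a b → E b a
  irrefl : ∀ a, ¬ E a a
  wt_symm : ∀ ⦃a b⦄, E a b → d a b = d b a
  nonneg : ∀ ⦃a b⦄, E a b → 0 ≤ d a b
  connected : ∀ x ∈ Vtx E, ∀ y ∈ Vtx E, Joined E x y
  edge_eq : ∀ ⦃a b⦄, E a b → d a b = hatd E d a b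

/-- A graph metric is a graph pseudometric with strictly positive weights. -/
def IsGraphMetric (E : X → X → Prop) (d : X → X → ℝ) : Prop :=
  IsGraphPseudometric E d ∧ ∀ ⦃a b⦄, E a b → 0 < d a b

/-- A floppy graph pseudometric: `ď(x,y) < d̂(x,y)` for every `xy ∈ [V]² \ E`. -/
def FloppyPseudometric (E : X → X → Prop) (d : X → X → ℝ) : Prop :=
  IsGraphPseudometric E d ∧
    ∀ x ∈ Vtx E, ∀ y ∈ Vtx E, x ≠ y → ¬ E x y → checkd E d x y < hatd E d x y

/-- A floppy graph metric: `ď(x,y) < d̂(x,y)` for every `xy ∈ [V]² \ E`. -/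
def FloppyMetric (E : X → X → Prop) (d : X → X → ℝ) : Prop :=
  IsGraphMetric E d ∧
    ∀ x ∈ Vtx E, ∀ y ∈ Vtx E, x ≠ y → ¬ E x y → checkd E d x y < hatd E d x y

/-- The edge relation of the one-step extension `E ∪ {xy}`. -/
def extEdge (E : X → X → Prop) (x y : X) : X → X → Prop :=
  fun a b => E a b ∨ (a = x ∧ b = y) ∨ (a = y ∧ b = x)

/-- The weight function of the one-step extension `d ∪ {⟨xy, r⟩}`. -/
noncomputable def extWt (d : X → X → ℝ) (x y : X) (r : ℝ) : X → X → ℝ :=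
  fun a b => if (a = x ∧ b = y) ∨ (a = y ∧ b = x) then r else d a b

/-- The set `[V]² \ E` of unordered pairs of distinct vertices that are not edges. -/
def nonEdgePairs (E : X → X → Prop) : Set (Sym2 X) :=
  {e | ∃ a b : X, e = s(a, b) ∧ a ≠ b ∧ a ∈ Vtx E ∧ b ∈ Vtx E ∧ ¬ E a b}

/-- A set of (unordered) weighted pairs, presented as a relation `R`, is a full metric
on `V`: it is symmetric, its domain is exactly `[V]²`, it is single-valued, positive,
and satisfies the triangle inequality. -/
def IsFullMetricRel (V : Set X) (R : X → X → ℝ → Prop) : Prop :=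
  (∀ a b r, R a b r → R b a r) ∧
  (∀ a b r, R a b r → a ∈ V ∧ b ∈ V ∧ a ≠ b) ∧
  (∀ a b, a ∈ V → b ∈ V → a ≠ b → ∃ r, R a b r) ∧
  (∀ a b r s, R a b r → R a b s → r = s) ∧
  (∀ a b r, R a b r → 0 < r) ∧
  (∀ a b c r s t, R a b r → R b c s → R a c t → t ≤ r + s)

/-- A weight function `D` on `[V]²` is a full metric on `V`. -/
def IsFullMetricOn (V : Set X) (D : X → X → ℝ) : Prop :=
  (∀ a b, a ∈ V → b ∈ V → a ≠ b → D a b = D b a) ∧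
  (∀ a b, a ∈ V → b ∈ V → a ≠ b → 0 < D a b) ∧
  (∀ a b c, a ∈ V → b ∈ V → c ∈ V → a ≠ b → b ≠ c → a ≠ c → D a c ≤ D a b + D b c)

/-- Player I has a winning strategy in the metric-extending game `Game_d(lam, Fam)`:
there are functions `S1, S2` choosing, for each inning `β < lam` and each sequence of
previous answers of player II, a legal doubleton in `[V]²` and a set from `Fam`, such that
for every play of player II respecting the strategy, the resulting relation
`d ∪ {⟨x_α y_α, r_α⟩ : α < lam}` is a full metric on `V`. -/
def WinningStratI (V : Set X) (E : X → X → Prop) (d : X → X → ℝ)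
    (lam : Ordinal.{u}) (Fam : Set (Set ℝ)) : Prop :=
  ∃ (S1 : ∀ β : Ordinal.{u}, β < lam → (∀ α : Ordinal.{u}, α < β → ℝ) → X × X)
    (S2 : ∀ β : Ordinal.{u}, β < lam → (∀ α : Ordinal.{u}, α < β → ℝ) → Set ℝ),
    (∀ β hβ s, S2 β hβ s ∈ Fam) ∧
    (∀ β hβ s, (S1 β hβ s).1 ∈ V ∧ (S1 β hβ s).2 ∈ V ∧ (S1 β hβ s).1 ≠ (S1 β hβ s).2) ∧
    (∀ s : ∀ α : Ordinal.{u}, α < lam → ℝ,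
      (∀ α (hα : α < lam), s α hα ∈ S2 α hα (fun γ hγ => s γ (hγ.trans hα))) →
      IsFullMetricRel V (fun a b r =>
        (E a b ∧ r = d a b) ∨
        ∃ α, ∃ hα : α < lam,
          ((a = (S1 α hα (fun γ hγ => s γ (hγ.trans hα))).1 ∧
            b = (S1 α hα (fun γ hγ => s γ (hγ.trans hα))).2) ∨
           (a = (S1 α hα (fun γ hγ => s γ (hγ.trans hα))).2 ∧
            b = (S1 α hα (fun γ hγ => s γ (hγ.trans hα))).1)) ∧
          r = s α hα))

/-- Player II has a winning strategy in the metric-extending game `Game_d(lam, Fam)`: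
there is a function `T` assigning to each inning `β < lam` and each sequence of moves of
player I (of length `β + 1`) an answer in the set component of the last move, such that
for every legal play of player I, the resulting relation is not a full metric on `V`. -/
def WinningStratII (V : Set X) (E : X → X → Prop) (d : X → X → ℝ)
    (lam : Ordinal.{u}) (Fam : Set (Set ℝ)) : Prop :=
  ∃ T : ∀ β : Ordinal.{u}, β < lam → (∀ α : Ordinal.{u}, α ≤ β → (X × X) × Set ℝ) → ℝ,
    (∀ β hβ p, (p β le_rfl).2 ∈ Fam → T β hβ p ∈ (p β le_rfl).2) ∧
    (∀ p : ∀ α : Ordinal.{u}, α < lam → (X × X) × Set ℝ,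
      (∀ α hα, (p α hα).1.1 ∈ V ∧ (p α hα).1.2 ∈ V ∧ (p α hα).1.1 ≠ (p α hα).1.2 ∧
        (p α hα).2 ∈ Fam) →
      ¬ IsFullMetricRel V (fun a b r =>
        (E a b ∧ r = d a b) ∨
        ∃ α, ∃ hα : α < lam,
          ((a = (p α hα).1.1 ∧ b = (p α hα).1.2) ∨
           (a = (p α hα).1.2 ∧ b = (p α hα).1.1)) ∧
          r = T α hα (fun γ hγ => p γ (lt_of_le_of_lt hγ hα))))

/-- The edge relation of the glued graph `E_d = E_p ∪ ⋃_{f ∈ F} E_f`. -/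
def gluedEdge (Ep : X → X → Prop) (F : Set ((X → X → Prop) × (X → X → ℝ))) :
    X → X → Prop :=
  fun a b => Ep a b ∨ ∃ f ∈ F, f.1 a b

/-- `Λ(v; B) = inf {d̂(a,v) + d̂(v,b) - d̂(a,b) : a, b ∈ B}`. -/
noncomputable def Lam (E : X → X → Prop) (d : X → X → ℝ) (v : X) (B : Set X) : ℝ :=
  sInf {r | ∃ a ∈ B, ∃ b ∈ B, r = hatd E d a v + hatd E d v b - hatd E d a b}

/-- The gluing setup: a graph pseudometric `p = (Ep, wp)` and a family `F` of graph
pseudometrics such that each member meets `V_p`, agrees with `p̂` on the intersection of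
the vertex sets, and distinct members only meet inside `V_p`; `wd` is the glued weight
function `d = p ∪ ⋃ F` on `E_d = E_p ∪ ⋃_{f ∈ F} E_f`. -/
structure GluingSetup (Ep : X → X → Prop) (wp : X → X → ℝ)
    (F : Set ((X → X → Prop) × (X → X → ℝ))) (wd : X → X → ℝ) : Prop where
  hp : IsGraphPseudometric Ep wp
  hF : ∀ f ∈ F, IsGraphPseudometric f.1 f.2
  meet : ∀ f ∈ F, (Vtx f.1 ∩ Vtx Ep).Nonempty
  agree : ∀ f ∈ F, ∀ x ∈ Vtx f.1 ∩ Vtx Ep, ∀ y ∈ Vtx f.1 ∩ Vtx Ep, x ≠ y →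
    hatd f.1 f.2 x y = hatd Ep wp x y
  inter_sub : ∀ f ∈ F, ∀ g ∈ F, f ≠ g → Vtx f.1 ∩ Vtx g.1 ⊆ Vtx Ep
  wd_p : ∀ ⦃a b⦄, Ep a b → wd a b = wp a b
  wd_F : ∀ f ∈ F, ∀ ⦃a b⦄, f.1 a b → wd a b = f.2 a b


theorem zero_mem_walkSums (E : X → X → Prop) (d : X → X → ℝ) (x : X) :
    (0 : ℝ) ∈ walkSums E d x x :=
  ⟨0, fun _ => x, rfl, rfl, by simp, by simp⟩

theorem walkSums_snoc {E : X → X → Prop} {d : X → X → ℝ} {x y z : X} {s : ℝ}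
    (hs : s ∈ walkSums E d x y) (hyz : E y z) : s + d y z ∈ walkSums E d x z := by
  obtain ⟨n, c, h0, hn, hE, rfl⟩ := hs
  refine ⟨n + 1, fun i => if i ≤ n then c i else z, by simpa using h0, by simp, ?_, ?_⟩
  · intro i hi
    rcases Nat.lt_succ_iff_lt_or_eq.mp hi with h | rfl
    · simpa [h.le, Nat.succ_le_of_lt h] using hE i h
    · simpa [hn] using hyz
  · rw [Finset.sum_range_succ]
    congr 1
    · refine Finset.sum_congr rfl fun i hi => ?_
      have h := Finset.mem_range.mp hi
      simp [h.le, Nat.succ_le_of_lt h]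
    · simp [hn]

/-- Induction on walks starting at a fixed point, adding one edge at the end. -/
theorem walkSums_induction {E : X → X → Prop} {d : X → X → ℝ} {x : X} {P : X → ℝ → Prop}
    (nil : P x 0) (snoc : ∀ v w s, P v s → E v w → P w (s + d v w)) {y : X} {s : ℝ}
    (hs : s ∈ walkSums E d x y) : P y s := by
  obtain ⟨n, c, h0, rfl, hE, rfl⟩ := hs
  induction n with
  | zero => simpa [h0] using nil
  | succ n ih =>
    rw [Finset.sum_range_succ]
    exact snoc _ _ _ (ih fun i hi => hE i (hi.trans n.lt_succ_self)) (hE n n.lt_succ_self)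

theorem walkSums_append {E : X → X → Prop} {d : X → X → ℝ} {x y z : X} {s t : ℝ}
    (hs : s ∈ walkSums E d x y) (ht : t ∈ walkSums E d y z) : s + t ∈ walkSums E d x z := by
  refine walkSums_induction (P := fun z t => s + t ∈ walkSums E d x z) (by simpa using hs)
    (fun v w t h hvw => ?_) ht
  rw [← add_assoc]
  exact walkSums_snoc h hvw

theorem walkSums_mono {E E' : X → X → Prop} {d d' : X → X → ℝ}
    (hE : ∀ a b, E a b → E' a b) (hd : ∀ a b, E a b → d' a b = d a b) (x y : X) :
    walkSums E d x y ⊆ walkSums E' d' x y := fun _ hs =>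
  walkSums_induction (P := fun z t => t ∈ walkSums E' d' x z) (zero_mem_walkSums _ _ _)
    (fun v w _ h hvw => hd v w hvw ▸ walkSums_snoc h (hE v w hvw)) hs

theorem Joined.walkSums_nonempty {E : X → X → Prop} {x y : X} (h : Joined E x y)
    (d : X → X → ℝ) : (walkSums E d x y).Nonempty := by
  obtain ⟨n, c, h0, hn, hE⟩ := h
  exact ⟨_, n, c, h0, hn, hE, rfl⟩

theorem walkSums_nonneg {E : X → X → Prop} {d : X → X → ℝ} (hd : ∀ ⦃a b⦄, E a b → 0 ≤ d a b)
    {x y : X} {s : ℝ} (hs : s ∈ walkSums E d x y) : 0 ≤ s :=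
  walkSums_induction (P := fun _ t => 0 ≤ t) le_rfl
    (fun _ _ _ h hvw => add_nonneg h (hd hvw)) hs

theorem hatd_nonneg {E : X → X → Prop} {d : X → X → ℝ} (hd : ∀ ⦃a b⦄, E a b → 0 ≤ d a b)
    (x y : X) : 0 ≤ hatd E d x y :=
  Real.sInf_nonneg fun _ => walkSums_nonneg hd

theorem hatd_le {E : X → X → Prop} {d : X → X → ℝ} (hd : ∀ ⦃a b⦄, E a b → 0 ≤ d a b)
    {x y : X} {s : ℝ} (hs : s ∈ walkSums E d x y) : hatd E d x y ≤ s :=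
  csInf_le ⟨0, fun _ => walkSums_nonneg hd⟩ hs

theorem hatd_self {E : X → X → Prop} {d : X → X → ℝ} (hd : ∀ ⦃a b⦄, E a b → 0 ≤ d a b)
    (x : X) : hatd E d x x = 0 :=
  (hatd_le hd (zero_mem_walkSums E d x)).antisymm (hatd_nonneg hd x x)

theorem le_hatd_add_hatd {E E' : X → X → Prop} {d d' : X → X → ℝ} {x y y' z : X} {r : ℝ}
    (hxy : Joined E x y) (hyz : Joined E' y' z)
    (h : ∀ s ∈ walkSums E d x y, ∀ t ∈ walkSums E' d' y' z, r ≤ s + t) :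
    r ≤ hatd E d x y + hatd E' d' y' z := by
  have hs : ∀ s ∈ walkSums E d x y, r - s ≤ hatd E' d' y' z := fun s hs =>
    le_csInf (hyz.walkSums_nonempty d') fun t ht => by linarith [h s hs t ht]
  have : r - hatd E' d' y' z ≤ hatd E d x y :=
    le_csInf (hxy.walkSums_nonempty d) fun s hs' => by linarith [hs s hs']
  linarith

namespace IsGraphPseudometric

variable {E : X → X → Prop} {d : X → X → ℝ}

theorem hatd_triangle (h : IsGraphPseudometric E d) {x y z : X} (hx : x ∈ Vtx E)
    (hy : y ∈ Vtx E) (hz : z ∈ Vtx E) : hatd E d x z ≤ hatd E d x y + hatd E d y z :=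
  le_hatd_add_hatd (h.connected x hx y hy) (h.connected y hy z hz) fun _ hs _ ht =>
    hatd_le h.nonneg (walkSums_append hs ht)

theorem hatd_le_add_edge (h : IsGraphPseudometric E d) {x y z : X} (hx : x ∈ Vtx E)
    (hyz : E y z) : hatd E d x z ≤ hatd E d x y + d y z := by
  rw [h.edge_eq hyz]
  exact h.hatd_triangle hx ⟨z, hyz⟩ ⟨y, h.symm hyz⟩

end IsGraphPseudometric

namespace GluingSetup

variable {Ep : X → X → Prop} {wp : X → X → ℝ} {F : Set ((X → X → Prop) × (X → X → ℝ))}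
  {wd : X → X → ℝ}

theorem wd_nonneg (hs : GluingSetup Ep wp F wd) ⦃a b : X⦄ (h : gluedEdge Ep F a b) :
    0 ≤ wd a b := by
  rcases h with h | ⟨f, hf, h⟩
  · exact hs.wd_p h ▸ hs.hp.nonneg h
  · exact hs.wd_F f hf h ▸ (hs.hF f hf).nonneg h

theorem hatd_le_of_mem_inter (hs : GluingSetup Ep wp F wd)
    {f : (X → X → Prop) × (X → X → ℝ)} (hf : f ∈ F) {a b : X}
    (ha : a ∈ Vtx f.1 ∩ Vtx Ep) (hb : b ∈ Vtx f.1 ∩ Vtx Ep) :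
    hatd Ep wp a b ≤ hatd f.1 f.2 a b := by
  by_cases hab : a = b
  · rw [hab, hatd_self hs.hp.nonneg]
    exact hatd_nonneg (hs.hF f hf).nonneg _ _
  · exact (hs.agree f hf a ha b hb hab).ge

/-- Every walk in the glued graph from a vertex of `p` is at least as long as some passage
inside `p` followed by a passage inside the piece containing its endpoint. -/
theorem le_of_mem_walkSums (hs : GluingSetup Ep wp F wd) {x y : X} (hx : x ∈ Vtx Ep) {s : ℝ}
    (h : s ∈ walkSums (gluedEdge Ep F) wd x y) :
    (y ∈ Vtx Ep → hatd Ep wp x y ≤ s) ∧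
      ∀ f ∈ F, y ∈ Vtx f.1 → ∃ b ∈ Vtx f.1 ∩ Vtx Ep,
        hatd Ep wp x b + hatd f.1 f.2 b y ≤ s := by
  have of_mem : ∀ {v : X} {t : ℝ}, v ∈ Vtx Ep → hatd Ep wp x v ≤ t →
      (v ∈ Vtx Ep → hatd Ep wp x v ≤ t) ∧
        ∀ f ∈ F, v ∈ Vtx f.1 → ∃ b ∈ Vtx f.1 ∩ Vtx Ep,
          hatd Ep wp x b + hatd f.1 f.2 b v ≤ t := by
    refine fun hv hle => ⟨fun _ => hle, fun f hf hvf => ⟨_, ⟨hvf, hv⟩, ?_⟩⟩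
    rwa [hatd_self (hs.hF f hf).nonneg, add_zero]
  refine walkSums_induction (P := fun y s => (y ∈ Vtx Ep → hatd Ep wp x y ≤ s) ∧
      ∀ f ∈ F, y ∈ Vtx f.1 → ∃ b ∈ Vtx f.1 ∩ Vtx Ep,
        hatd Ep wp x b + hatd f.1 f.2 b y ≤ s)
    (of_mem hx (hatd_self hs.hp.nonneg x).le) ?_ h
  rintro v w t ⟨ihp, ihF⟩ (hvw | ⟨f, hf, hvw⟩)
  · refine of_mem ⟨v, hs.hp.symm hvw⟩ ?_
    rw [hs.wd_p hvw]
    linarith [ihp ⟨w, hvw⟩, hs.hp.hatd_le_add_edge hx hvw]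
  · obtain ⟨b, hb, hle⟩ := ihF f hf ⟨w, hvw⟩
    have hwf : w ∈ Vtx f.1 := ⟨v, (hs.hF f hf).symm hvw⟩
    have hbw := (hs.hF f hf).hatd_le_add_edge hb.1 hvw
    rw [hs.wd_F f hf hvw]
    by_cases hw : w ∈ Vtx Ep
    · refine of_mem hw ?_
      linarith [hs.hp.hatd_triangle hx hb.2 hw, hs.hatd_le_of_mem_inter hf hb ⟨hwf, hw⟩]
    · refine ⟨fun hw' => absurd hw' hw, fun g hg hwg => ?_⟩
      obtain rfl : f = g := by
        by_contra hne
        exact hw (hs.inter_sub f hf g hg hne ⟨hwf, hwg⟩)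
      exact ⟨b, hb, by linarith⟩

theorem hatd_glued_le (hs : GluingSetup Ep wp F wd) {x y b : X}
    {g : (X → X → Prop) × (X → X → ℝ)} (hg : g ∈ F) (hx : x ∈ Vtx Ep) (hy : y ∈ Vtx g.1)
    (hb : b ∈ Vtx g.1 ∩ Vtx Ep) :
    hatd (gluedEdge Ep F) wd x y ≤ hatd Ep wp x b + hatd g.1 g.2 b y :=
  le_hatd_add_hatd (hs.hp.connected x hx b hb.2) ((hs.hF g hg).connected b hb.1 y hy)
    fun _ hu _ hv => hatd_le hs.wd_nonneg <| walkSums_append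
      (walkSums_mono (fun _ _ => Or.inl) (fun _ _ h => hs.wd_p h) _ _ hu)
      (walkSums_mono (fun _ _ h => Or.inr ⟨g, hg, h⟩) (fun _ _ h => hs.wd_F g hg h) _ _ hv)

theorem walkSums_glued_nonempty (hs : GluingSetup Ep wp F wd) {x y : X}
    {g : (X → X → Prop) × (X → X → ℝ)} (hg : g ∈ F) (hx : x ∈ Vtx Ep) (hy : y ∈ Vtx g.1) :
    (walkSums (gluedEdge Ep F) wd x y).Nonempty := by
  obtain ⟨b, hb⟩ := hs.meet g hg
  obtain ⟨u, hu⟩ := (hs.hp.connected x hx b hb.2).walkSums_nonempty wp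
  obtain ⟨v, hv⟩ := ((hs.hF g hg).connected b hb.1 y hy).walkSums_nonempty g.2
  exact ⟨_, walkSums_append
    (walkSums_mono (fun _ _ => Or.inl) (fun _ _ h => hs.wd_p h) _ _ hu)
    (walkSums_mono (fun _ _ h => Or.inr ⟨g, hg, h⟩) (fun _ _ h => hs.wd_F g hg h) _ _ hv)⟩

end GluingSetup

/-- In the gluing setup, for `x ∈ V_p`, `g ∈ 𝔉` and `y ∈ V_g`:
`d̂(x,y) = inf {p̂(x,b) + ĝ(b,y) : b ∈ V_g ∩ V_p}`. -/
theorem gluing_hatd_p_to_g (Ep : X → X → Prop) (wp : X → X → ℝ)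
    (F : Set ((X → X → Prop) × (X → X → ℝ))) (wd : X → X → ℝ)
    (hs : GluingSetup Ep wp F wd) :
    ∀ x ∈ Vtx Ep, ∀ g ∈ F, ∀ y ∈ Vtx g.1,
      hatd (gluedEdge Ep F) wd x y =
        sInf {t : ℝ | ∃ b ∈ Vtx g.1 ∩ Vtx Ep,
          t = hatd Ep wp x b + hatd g.1 g.2 b y} := by
  intro x hx g hg y hy
  apply le_antisymm
  · obtain ⟨b, hb⟩ := hs.meet g hg
    refine le_csInf ⟨_, b, hb, rfl⟩ ?_
    rintro _ ⟨b, hb, rfl⟩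
    exact hs.hatd_glued_le hg hx hy hb
  · refine le_csInf (hs.walkSums_glued_nonempty hg hx hy) fun s h => ?_
    obtain ⟨b, hb, hle⟩ := (hs.le_of_mem_walkSums hx h).2 g hg hy
    refine le_trans (csInf_le ⟨0, ?_⟩ ⟨b, hb, rfl⟩) hle
    rintro _ ⟨c, -, rfl⟩
    exact add_nonneg (hatd_nonneg hs.hp.nonneg _ _) (hatd_nonneg (hs.hF g hg).nonneg _ _)

end GraphMetricPaper
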